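/- Under the stated setup and assumptions, the canonical angles θ_1 ≤ … ≤ θ_k between the column spaces of U_k and Û satisfy sin θ_j ≤ γ_j^{2q+1}·‖Ω_2Ω_1†‖₂ / √(1 + γ_j^{4q+2}·‖Ω_2Ω_1†‖₂²) for every j = 1,…,k. -/

import Mathlib

open scoped ENNReal
open Matrix

/-- The `j`-th largest singular value (0-indexed) of a complex matrix,
obtained as the decreasingly sorted square roots of the eigenvalues of `Mᴴ * M`. -/
noncomputable def sval {m n : ℕ} (M : Matrix (Fin m) (Fin n) ℂ) (j : ℕ) : ℝ :=
  (List.insertionSort (· ≥ ·)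
    ((List.ofFn (Matrix.isHermitian_conjTranspose_mul_self M).eigenvalues).map Real.sqrt)).getD j 0

/-- The Schatten-`p` norm (`p = ∞` gives the spectral norm). -/
noncomputable def schatten {m n : ℕ} (p : ℝ≥0∞) (M : Matrix (Fin m) (Fin n) ℂ) : ℝ :=
  if p = ⊤ then sval M 0
  else (∑ j ∈ Finset.range n, sval M j ^ p.toReal) ^ (1 / p.toReal)

/-- Moore–Penrose pseudoinverse of a full-row-rank matrix. -/
noncomputable def rpinv {a b : ℕ} (M : Matrix (Fin a) (Fin b) ℂ) : Matrix (Fin b) (Fin a) ℂ :=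
  Mᴴ * (M * Mᴴ)⁻¹

/-- Rectangular diagonal matrix with entries `σ (off), σ (off+1), …` on the diagonal. -/
noncomputable def diagRect (σ : ℕ → ℝ) (off a b : ℕ) : Matrix (Fin a) (Fin b) ℂ :=
  Matrix.of fun i j => if (i : ℕ) = (j : ℕ) then (σ (off + (i : ℕ)) : ℂ) else 0

/-- The first `b` columns of a matrix with `b + c` columns. -/
def colsL {a b c : ℕ} (M : Matrix (Fin a) (Fin (b + c)) ℂ) : Matrix (Fin a) (Fin b) ℂ :=
  M.submatrix id (Fin.castAdd c)

/-- The last `c` columns of a matrix with `b + c` columns. -/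
def colsR {a b c : ℕ} (M : Matrix (Fin a) (Fin (b + c)) ℂ) : Matrix (Fin a) (Fin c) ℂ :=
  M.submatrix id (Fin.natAdd b)

/-!
If `1 - P` has rank at most `d`, then the singular value `σ_{d+1}(M)` is at most `‖M * P‖`, by the
min-max principle. With `P` the projection onto the first `j` coordinates, it therefore suffices to
bound `‖(1 - Q * Qᴴ) * U_k * P‖`. The column space of `Q` contains that of `U_k * P + U_⊥ * H`,
where `H = Σ_⊥^{2q+1} * Ω₂ * Ω₁† * Σ_k^{-(2q+1)} * P` and `‖H‖ ≤ t = γ_j^{2q+1} * ‖Ω₂ * Ω₁†‖`.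
So the tangent of the angle is at most `t`, and its sine is at most `t / √(1 + t²)`.
-/

section SingularValues

open Module

variable {𝕜 E F : Type*} [RCLike 𝕜] [NormedAddCommGroup E] [InnerProductSpace 𝕜 E]
  [FiniteDimensional 𝕜 E] [NormedAddCommGroup F] [InnerProductSpace 𝕜 F] [FiniteDimensional 𝕜 F]

lemma norm_apply_sq_eq_sum_singularValues (T : E →ₗ[𝕜] F) (x : E) :
    ‖T x‖ ^ 2 = ∑ i : Fin (finrank 𝕜 E), T.singularValues i ^ 2 *
      ‖(T.isSymmetric_adjoint_comp_self.eigenvectorBasis rfl).repr x i‖ ^ 2 := by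
  set hT := T.isSymmetric_adjoint_comp_self
  set b := hT.eigenvectorBasis rfl
  have hinner : ((‖T x‖ ^ 2 : ℝ) : 𝕜) = inner 𝕜 (b.repr x) (b.repr ((T.adjoint ∘ₗ T) x)) := by
    rw [b.repr.inner_map_map, LinearMap.comp_apply, LinearMap.adjoint_inner_right,
      inner_self_eq_norm_sq_to_K, RCLike.ofReal_pow]
  apply RCLike.ofReal_injective (K := 𝕜)
  rw [hinner, PiLp.inner_apply, RCLike.ofReal_sum]
  refine Finset.sum_congr rfl fun i _ => ?_
  rw [hT.eigenvectorBasis_apply_self_apply rfl, T.sq_singularValues_fin rfl, RCLike.ofReal_mul,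
    RCLike.ofReal_pow, ← RCLike.conj_mul, RCLike.inner_apply]
  ring

lemma norm_apply_le_singularValues_zero_mul (T : E →ₗ[𝕜] F) (x : E) :
    ‖T x‖ ≤ T.singularValues 0 * ‖x‖ := by
  set b := T.isSymmetric_adjoint_comp_self.eigenvectorBasis rfl
  refine le_of_sq_le_sq ?_ (mul_nonneg (T.singularValues_nonneg 0) (norm_nonneg x))
  rw [norm_apply_sq_eq_sum_singularValues, mul_pow, ← b.repr.norm_map x,
    EuclideanSpace.norm_sq_eq, Finset.mul_sum]
  gcongr with i
  · exact T.singularValues_nonneg i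
  · exact T.singularValues_antitone (Nat.zero_le i)

lemma singularValues_mul_norm_le_of_repr_eq_zero (T : E →ₗ[𝕜] F) {d : ℕ} {x : E}
    (hx : ∀ i : Fin (finrank 𝕜 E), d < i →
      (T.isSymmetric_adjoint_comp_self.eigenvectorBasis rfl).repr x i = 0) :
    T.singularValues d * ‖x‖ ≤ ‖T x‖ := by
  set b := T.isSymmetric_adjoint_comp_self.eigenvectorBasis rfl
  refine le_of_sq_le_sq ?_ (norm_nonneg _)
  rw [norm_apply_sq_eq_sum_singularValues, mul_pow, ← b.repr.norm_map x,
    EuclideanSpace.norm_sq_eq, Finset.mul_sum]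
  refine Finset.sum_le_sum fun i _ => ?_
  rcases lt_or_ge d (i : ℕ) with hi | hi
  · simp [b, hx i hi]
  · gcongr
    · exact T.singularValues_nonneg d
    · exact T.singularValues_antitone hi

lemma singularValues_le_of_forall_mem_norm_le (T : E →ₗ[𝕜] F) {d : ℕ} {K : Submodule 𝕜 E}
    (hK : finrank 𝕜 E ≤ finrank 𝕜 K + d) {c : ℝ} (hc : 0 ≤ c)
    (h : ∀ x ∈ K, ‖T x‖ ≤ c * ‖x‖) : T.singularValues d ≤ c := by
  rcases le_or_gt (finrank 𝕜 E) d with hd | hd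
  · rwa [T.singularValues_of_finrank_le hd]
  set b := T.isSymmetric_adjoint_comp_self.eigenvectorBasis rfl
  let head : Fin (d + 1) → E := b ∘ Fin.castLE hd
  have hhead : finrank 𝕜 (Submodule.span 𝕜 (Set.range head)) = d + 1 := by
    rw [finrank_span_eq_card
      (b.orthonormal.linearIndependent.comp _ (Fin.castLE_injective hd)), Fintype.card_fin]
  have hmeet : ¬ Disjoint K (Submodule.span 𝕜 (Set.range head)) := fun hdisj => by
    have := Submodule.finrank_add_finrank_le_of_disjoint hdisj
    omega
  obtain ⟨x, hxK, hxhead, hx0⟩ : ∃ x ∈ K, x ∈ Submodule.span 𝕜 (Set.range head) ∧ x ≠ 0 := by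
    simpa [Submodule.disjoint_def] using hmeet
  have hrepr : ∀ i : Fin (finrank 𝕜 E), d < i → b.repr x i = 0 := fun i hi => by
    rw [b.repr_apply_apply]
    refine (Submodule.mem_orthogonal_singleton_iff_inner_right).mp
      (Submodule.span_le.mpr ?_ hxhead)
    rintro _ ⟨a, rfl⟩
    refine Submodule.mem_orthogonal_singleton_iff_inner_right.mpr (b.inner_eq_zero ?_)
    rintro rfl
    have := a.isLt
    simp only [Fin.val_castLE] at hi
    omega
  exact le_of_mul_le_mul_right
    ((singularValues_mul_norm_le_of_repr_eq_zero T hrepr).trans (h x hxK)) (norm_pos_iff.mpr hx0)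

end SingularValues

lemma singularValues_toEuclideanLin {m n : ℕ} (M : Matrix (Fin m) (Fin n) ℂ)
    (i : Fin (Fintype.card (Fin n))) :
    (toEuclideanLin M).singularValues i =
      √((isHermitian_conjTranspose_mul_self M).eigenvalues₀ i) := by
  rw [(toEuclideanLin M).singularValues_fin finrank_euclideanSpace, IsHermitian.eigenvalues₀]
  have h : toEuclideanLin (Mᴴ * M) = (toEuclideanLin M).adjoint ∘ₗ toEuclideanLin M := by
    rw [← toEuclideanLin_conjTranspose_eq_adjoint]
    exact toLpLin_mul_same ..
  simp only [h]

lemma sval_eq_singularValues {m n : ℕ} (M : Matrix (Fin m) (Fin n) ℂ) (j : ℕ) :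
    sval M j = (toEuclideanLin M).singularValues j := by
  set s := (toEuclideanLin M).singularValues
  let e : Equiv.Perm (Fin n) :=
    (Fintype.equivOfCardEq (Fintype.card_fin _)).symm.trans (finCongr (Fintype.card_fin n))
  have hlist : (List.ofFn (isHermitian_conjTranspose_mul_self M).eigenvalues).map Real.sqrt =
      List.ofFn ((fun i : Fin n => s i) ∘ e) := by
    rw [List.map_ofFn]
    congr 1
    ext i
    exact (singularValues_toEuclideanLin M _).symm
  have hsorted : List.insertionSort (· ≥ ·) (List.ofFn ((fun i : Fin n => s i) ∘ e)) =
      List.ofFn fun i : Fin n => s i := by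
    refine List.Perm.eq_of_pairwise' (List.pairwise_insertionSort _ _) ?_
      ((List.perm_insertionSort _ _).trans (e.ofFn_comp_perm _))
    exact Antitone.sortedGE_ofFn
      (fun a b hab => (toEuclideanLin M).singularValues_antitone hab) |>.pairwise
  rw [sval, hlist, hsorted]
  rcases lt_or_ge j n with hj | hj
  · simp [hj]
  · rw [List.getD_eq_default _ _ (by simpa using hj), LinearMap.singularValues_of_finrank_le]
    simpa using hj

section CanonicalAngles

open scoped Matrix.Norms.L2Operator

section OperatorNorm

variable {𝕜 m a b c l : Type*} [RCLike 𝕜] [Fintype m] [Fintype a] [Fintype b] [Fintype c]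
  [Fintype l] [DecidableEq a] [DecidableEq b] [DecidableEq c] [DecidableEq l]

lemma l2_opNorm_mul_add_mul_sq_le {U₁ : Matrix m a 𝕜} {U₂ : Matrix m b 𝕜} (h₁ : U₁ᴴ * U₁ = 1)
    (h₂ : U₂ᴴ * U₂ = 1) (h₁₂ : U₁ᴴ * U₂ = 0) (X : Matrix a c 𝕜) (Y : Matrix b c 𝕜) :
    ‖U₁ * X + U₂ * Y‖ ^ 2 ≤ ‖X‖ ^ 2 + ‖Y‖ ^ 2 := by
  have h₂₁ : U₂ᴴ * U₁ = 0 := by simpa using congrArg conjTranspose h₁₂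
  have hgram : (U₁ * X + U₂ * Y)ᴴ * (U₁ * X + U₂ * Y) = Xᴴ * X + Yᴴ * Y := by
    simp only [conjTranspose_add, conjTranspose_mul, Matrix.add_mul, Matrix.mul_add,
      Matrix.mul_assoc]
    simp only [← Matrix.mul_assoc U₁ᴴ, ← Matrix.mul_assoc U₂ᴴ, h₁, h₂, h₁₂, h₂₁, Matrix.one_mul,
      Matrix.zero_mul, Matrix.mul_zero, add_zero, zero_add]
  simpa only [sq, ← l2_opNorm_conjTranspose_mul_self, hgram] using norm_add_le (Xᴴ * X) (Yᴴ * Y)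

variable [DecidableEq m]

lemma isStarProjection_one_sub_mul_conjTranspose {Q : Matrix m l 𝕜} (hQ : Qᴴ * Q = 1) :
    IsStarProjection (1 - Q * Qᴴ) := by
  refine IsStarProjection.one_sub ⟨?_, isHermitian_mul_conjTranspose_self Q⟩
  rw [IsIdempotentElem, Matrix.mul_assoc, ← Matrix.mul_assoc Qᴴ, hQ, Matrix.one_mul]

lemma l2_opNorm_one_sub_mul_le_sub {Q : Matrix m l 𝕜} (hQ : Qᴴ * Q = 1) (W : Matrix m c 𝕜)
    (Z : Matrix l c 𝕜) : ‖(1 - Q * Qᴴ) * W‖ ≤ ‖W - Q * Z‖ := by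
  have hkill : (1 - Q * Qᴴ) * (Q * Z) = 0 := by
    rw [← Matrix.mul_assoc, Matrix.sub_mul, Matrix.mul_assoc Q, hQ, Matrix.one_mul,
      Matrix.mul_one, sub_self, Matrix.zero_mul]
  calc ‖(1 - Q * Qᴴ) * W‖ = ‖(1 - Q * Qᴴ) * (W - Q * Z)‖ := by
        rw [Matrix.mul_sub, hkill, sub_zero]
    _ ≤ ‖1 - Q * Qᴴ‖ * ‖W - Q * Z‖ := l2_opNorm_mul _ _
    _ ≤ ‖W - Q * Z‖ := mul_le_of_le_one_left (norm_nonneg _)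
        (isStarProjection_one_sub_mul_conjTranspose hQ).norm_le

lemma l2_opNorm_one_sub_mul_le_div_sqrt {Q : Matrix m l 𝕜} {U₁ : Matrix m a 𝕜}
    {U₂ : Matrix m b 𝕜} {X : Matrix a c 𝕜} {Y : Matrix b c 𝕜} {Z : Matrix l c 𝕜}
    (hQ : Qᴴ * Q = 1) (h₁ : U₁ᴴ * U₁ = 1) (h₂ : U₂ᴴ * U₂ = 1) (h₁₂ : U₁ᴴ * U₂ = 0)
    (hZ : Q * Z = U₁ * X + U₂ * Y) (hX : ‖X‖ ≤ 1) {t : ℝ} (hY : ‖Y‖ ≤ t) :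
    ‖(1 - Q * Qᴴ) * (U₁ * X)‖ ≤ t / √(1 + t ^ 2) := by
  -- `s` minimizes `(1 - s) ^ 2 + s ^ 2 * t ^ 2`.
  set s : ℝ := (1 + t ^ 2)⁻¹ with hs
  have ht : 0 ≤ t := (norm_nonneg Y).trans hY
  have hpos : 0 < 1 + t ^ 2 := by positivity
  have hsub : U₁ * X - Q * ((s : 𝕜) • Z) =
      U₁ * (((1 - s : ℝ) : 𝕜) • X) + U₂ * (((-s : ℝ) : 𝕜) • Y) := by
    simp only [Matrix.mul_smul, hZ, RCLike.ofReal_sub, RCLike.ofReal_neg, RCLike.ofReal_one]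
    module
  refine le_of_sq_le_sq ?_ (by positivity)
  calc ‖(1 - Q * Qᴴ) * (U₁ * X)‖ ^ 2
      ≤ ‖U₁ * (((1 - s : ℝ) : 𝕜) • X) + U₂ * (((-s : ℝ) : 𝕜) • Y)‖ ^ 2 := by
        rw [← hsub]
        gcongr
        exact l2_opNorm_one_sub_mul_le_sub hQ _ _
    _ ≤ ‖((1 - s : ℝ) : 𝕜) • X‖ ^ 2 + ‖((-s : ℝ) : 𝕜) • Y‖ ^ 2 :=
        l2_opNorm_mul_add_mul_sq_le h₁ h₂ h₁₂ _ _
    _ = (1 - s) ^ 2 * ‖X‖ ^ 2 + s ^ 2 * ‖Y‖ ^ 2 := by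
        simp only [norm_smul, mul_pow, RCLike.norm_ofReal, sq_abs, neg_sq]
    _ ≤ (1 - s) ^ 2 * 1 ^ 2 + s ^ 2 * t ^ 2 := by gcongr
    _ = (t / √(1 + t ^ 2)) ^ 2 := by
        rw [div_pow, Real.sq_sqrt hpos.le, hs]
        field_simp
        ring

end OperatorNorm

lemma l2_opNorm_le_sval_zero {m n : ℕ} (M : Matrix (Fin m) (Fin n) ℂ) : ‖M‖ ≤ sval M 0 := by
  rw [l2_opNorm_def, sval_eq_singularValues]
  exact ContinuousLinearMap.opNorm_le_bound _ (LinearMap.singularValues_nonneg _ _)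
    (norm_apply_le_singularValues_zero_mul (toEuclideanLin M))

lemma sval_le_l2_opNorm_mul {m n d : ℕ} (M : Matrix (Fin m) (Fin n) ℂ)
    (P : Matrix (Fin n) (Fin n) ℂ) (hP : (1 - P).rank ≤ d) : sval M d ≤ ‖M * P‖ := by
  rw [sval_eq_singularValues]
  refine singularValues_le_of_forall_mem_norm_le (K := (toEuclideanLin (1 - P)).ker) _ ?_
    (norm_nonneg _) fun x hx => ?_
  · have hrank := LinearMap.finrank_range_add_finrank_ker (toEuclideanLin (1 - P))
    rw [rank_eq_finrank_range_toLin _ (EuclideanSpace.basisFun (Fin n) ℂ).toBasis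
      (EuclideanSpace.basisFun (Fin n) ℂ).toBasis, ← toEuclideanLin_eq_toLin_orthonormal] at hP
    omega
  · have hPx : P *ᵥ x.ofLp = x.ofLp := by
      have hx' : (1 - P) *ᵥ x.ofLp = 0 := congrArg WithLp.ofLp hx
      rw [sub_mulVec, one_mulVec, sub_eq_zero] at hx'
      exact hx'.symm
    have := l2_opNorm_mulVec (M * P) x
    rwa [← mulVec_mulVec, hPx] at this

lemma diagRect_mul_apply (σ : ℕ → ℝ) (off : ℕ) {a b c : ℕ} (M : Matrix (Fin b) (Fin c) ℂ)
    (i : Fin a) (j : Fin c) : (diagRect σ off a b * M) i j =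
      if h : (i : ℕ) < b then (σ (off + i) : ℂ) * M ⟨i, h⟩ j else 0 := by
  simp only [mul_apply, diagRect, of_apply, ite_mul, zero_mul]
  split_ifs with h
  · rw [Finset.sum_eq_single ⟨i, h⟩ (fun l _ hl => if_neg fun e => hl (Fin.ext e.symm)) (by simp),
      if_pos rfl]
  · exact Finset.sum_eq_zero fun l _ => if_neg fun e : (i : ℕ) = l => h (e ▸ l.isLt)

lemma conjTranspose_diagRect (σ : ℕ → ℝ) (off a b : ℕ) :
    (diagRect σ off a b)ᴴ = diagRect σ off b a := by
  ext i j
  by_cases h : (i : ℕ) = j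
  · simp [diagRect, h]
  · simp [diagRect, h, Ne.symm h]

lemma diagRect_mul_diagRect_mul_diagRect (σ τ υ : ℕ → ℝ) (off a b : ℕ) :
    diagRect σ off a b * diagRect τ off b a * diagRect υ off a b =
      diagRect (σ * τ * υ) off a b := by
  ext i j
  rw [Matrix.mul_assoc, diagRect_mul_apply]
  split_ifs with h
  · rw [diagRect_mul_apply, dif_pos i.isLt]
    simp [diagRect, mul_assoc]
  · exact (if_neg fun e : (i : ℕ) = j => h (e ▸ j.isLt)).symm

lemma diagRect_mul_conjTranspose_pow_mul (σ : ℕ → ℝ) (off a b q : ℕ) :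
    (diagRect σ off a b * (diagRect σ off a b)ᴴ) ^ q * diagRect σ off a b =
      diagRect (σ ^ (2 * q + 1)) off a b := by
  induction q with
  | zero => simp
  | succ q ih =>
    rw [pow_succ', Matrix.mul_assoc, ih, conjTranspose_diagRect, diagRect_mul_diagRect_mul_diagRect]
    congr 1
    ring

lemma l2_opNorm_diagRect_le {σ : ℕ → ℝ} {off a b : ℕ} {c : ℝ} (hc : 0 ≤ c)
    (hσ : ∀ i, |σ (off + i)| ≤ c) : ‖diagRect σ off a b‖ ≤ c := by
  have hgram : (diagRect σ off a b)ᴴ * diagRect σ off a b =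
      diagonal fun j : Fin b => if (j : ℕ) < a then (σ (off + j) : ℂ) ^ 2 else 0 := by
    ext i j
    rw [conjTranspose_diagRect, diagRect_mul_apply, diagonal_apply]
    simp only [diagRect, of_apply, Fin.ext_iff]
    split_ifs <;> simp [sq]
  refine le_of_sq_le_sq ?_ hc
  rw [sq, ← l2_opNorm_conjTranspose_mul_self, hgram, l2_opNorm_diagonal,
    pi_norm_le_iff_of_nonneg (sq_nonneg c)]
  intro j
  split_ifs
  · rw [norm_pow, Complex.norm_real, Real.norm_eq_abs]
    gcongr
    exact hσ j
  · simpa using sq_nonneg c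

lemma pow_mul_conjTranspose_mul_eq {m n : ℕ} {U : Matrix (Fin m) (Fin m) ℂ}
    {V : Matrix (Fin n) (Fin n) ℂ} (hU : Uᴴ * U = 1) (hV : Vᴴ * V = 1)
    (D : Matrix (Fin m) (Fin n) ℂ) (q : ℕ) :
    (U * D * Vᴴ * (U * D * Vᴴ)ᴴ) ^ q * (U * D * Vᴴ) = U * ((D * Dᴴ) ^ q * D) * Vᴴ := by
  have hAA : U * D * Vᴴ * (U * D * Vᴴ)ᴴ = U * (D * Dᴴ) * Uᴴ := by
    simp only [conjTranspose_mul, conjTranspose_conjTranspose, Matrix.mul_assoc]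
    rw [← Matrix.mul_assoc Vᴴ, hV, Matrix.one_mul]
  rw [hAA]
  induction q with
  | zero => simp
  | succ q ih =>
    rw [pow_succ', Matrix.mul_assoc, ih, pow_succ']
    simp only [Matrix.mul_assoc]
    rw [← Matrix.mul_assoc Uᴴ, hU, Matrix.one_mul]

lemma mul_eq_colsL_mul_add_colsR_mul {a c k m : ℕ} (U : Matrix (Fin a) (Fin (k + m)) ℂ)
    (M : Matrix (Fin (k + m)) (Fin c) ℂ) :
    U * M = colsL U * M.submatrix (Fin.castAdd m) id + colsR U * M.submatrix (Fin.natAdd k) id := by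
  ext i j
  simp [mul_apply, Fin.sum_univ_add, colsL, colsR]

lemma mul_diagRect_mul_conjTranspose_eq {a b k m n : ℕ} (U : Matrix (Fin a) (Fin (k + m)) ℂ)
    (V : Matrix (Fin b) (Fin (k + n)) ℂ) (σ : ℕ → ℝ) :
    U * diagRect σ 0 (k + m) (k + n) * Vᴴ =
      colsL U * diagonal (fun l : Fin k => (σ l : ℂ)) * (colsL V)ᴴ +
        colsR U * diagRect σ k m n * (colsR V)ᴴ := by
  have hL : (diagRect σ 0 (k + m) (k + n) * Vᴴ).submatrix (Fin.castAdd m) id =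
      diagonal (fun l : Fin k => (σ l : ℂ)) * (colsL V)ᴴ := by
    ext i j
    have hi : (Fin.castAdd m i : ℕ) < k + n := Nat.lt_add_right n i.isLt
    rw [submatrix_apply, diagRect_mul_apply, dif_pos hi, diagonal_mul, Nat.zero_add]
    rfl
  have hR : (diagRect σ 0 (k + m) (k + n) * Vᴴ).submatrix (Fin.natAdd k) id =
      diagRect σ k m n * (colsR V)ᴴ := by
    ext i j
    rw [submatrix_apply, diagRect_mul_apply, diagRect_mul_apply]
    simp only [Fin.val_natAdd, Nat.add_lt_add_iff_left, Nat.zero_add]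
    rfl
  rw [Matrix.mul_assoc, mul_eq_colsL_mul_add_colsR_mul, hL, hR, Matrix.mul_assoc, Matrix.mul_assoc]

lemma conjTranspose_colsL_mul_colsL {a b c : ℕ} {U : Matrix (Fin a) (Fin (b + c)) ℂ}
    (hU : Uᴴ * U = 1) : (colsL U)ᴴ * colsL U = 1 := by
  rw [← submatrix_one _ (Fin.castAdd_injective b c), ← hU]
  rfl

lemma conjTranspose_colsR_mul_colsR {a b c : ℕ} {U : Matrix (Fin a) (Fin (b + c)) ℂ}
    (hU : Uᴴ * U = 1) : (colsR U)ᴴ * colsR U = 1 := by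
  rw [← submatrix_one _ (Fin.natAdd_injective c b), ← hU]
  rfl

lemma conjTranspose_colsL_mul_colsR {a b c : ℕ} {U : Matrix (Fin a) (Fin (b + c)) ℂ}
    (hU : Uᴴ * U = 1) : (colsL U)ᴴ * colsR U = 0 := by
  have h : (colsL U)ᴴ * colsR U = (Uᴴ * U).submatrix (Fin.castAdd c) (Fin.natAdd b) := rfl
  ext i j
  have hne : Fin.castAdd c i ≠ Fin.natAdd b j := by
    rw [Ne, Fin.ext_iff, Fin.val_castAdd, Fin.val_natAdd]
    omega
  rw [h, hU, submatrix_apply, one_apply_ne hne, Matrix.zero_apply]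

lemma pow_mul_eq_colsL_add_colsR {k m n : ℕ} {U : Matrix (Fin (k + m)) (Fin (k + m)) ℂ}
    {V : Matrix (Fin (k + n)) (Fin (k + n)) ℂ} (hU : Uᴴ * U = 1) (hV : Vᴴ * V = 1) {σ : ℕ → ℝ}
    {A : Matrix (Fin (k + m)) (Fin (k + n)) ℂ}
    (hA : A = U * diagRect σ 0 (k + m) (k + n) * Vᴴ) (q : ℕ) :
    (A * Aᴴ) ^ q * A =
      colsL U * diagonal (fun l : Fin k => ((σ ^ (2 * q + 1)) l : ℂ)) * (colsL V)ᴴ +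
        colsR U * diagRect (σ ^ (2 * q + 1)) k m n * (colsR V)ᴴ := by
  rw [hA, pow_mul_conjTranspose_mul_eq hU hV, diagRect_mul_conjTranspose_pow_mul,
    mul_diagRect_mul_conjTranspose_eq]

/-- The diagonal matrix with entries `τ 0, …, τ j, 0, …, 0`. For `τ = 1` it is the projection onto
the first `j + 1` coordinates, which selects the leading `j + 1` singular directions. -/
def headDiagonal {k : ℕ} (τ : ℕ → ℝ) (j : Fin k) : Matrix (Fin k) (Fin k) ℂ :=
  diagonal fun l => if l ≤ j then (τ l : ℂ) else 0

lemma l2_opNorm_headDiagonal_le {k : ℕ} {τ : ℕ → ℝ} {j : Fin k} {c : ℝ} (hc : 0 ≤ c)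
    (hτ : ∀ l ≤ j, |τ l| ≤ c) : ‖headDiagonal τ j‖ ≤ c := by
  rw [headDiagonal, l2_opNorm_diagonal, pi_norm_le_iff_of_nonneg hc]
  intro l
  split_ifs with hl
  · rw [Complex.norm_real]
    exact hτ l hl
  · rwa [norm_zero]

lemma diagonal_mul_headDiagonal_inv {k : ℕ} {τ : ℕ → ℝ} {j : Fin k} (hτ : ∀ l ≤ j, τ l ≠ 0) :
    diagonal (fun l : Fin k => (τ l : ℂ)) * headDiagonal τ⁻¹ j = headDiagonal 1 j := by
  rw [headDiagonal, diagonal_mul_diagonal, headDiagonal]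
  congr 1
  ext l
  split_ifs with hl
  · have := hτ l hl
    simp [this]
  · exact mul_zero _

lemma rank_one_sub_headDiagonal {k : ℕ} (j : Fin k) :
    (1 - headDiagonal 1 j).rank = k - 1 - j := by
  have h : 1 - headDiagonal 1 j = diagonal fun l => if l ≤ j then (0 : ℂ) else 1 := by
    rw [headDiagonal, ← diagonal_one, diagonal_sub]
    congr 1
    ext l
    split_ifs <;> simp
  rw [h, rank_diagonal, ← Fin.card_Ioi, ← Fintype.card_coe]
  exact Fintype.card_congr (Equiv.subtypeEquivRight fun l => by simp)

lemma l2_opNorm_diagRect_mul_mul_headDiagonal_le {k m n : ℕ} {σ : ℕ → ℝ} (hσ0 : ∀ i, 0 ≤ σ i)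
    (hσm : Antitone σ) (p : ℕ) (F : Matrix (Fin n) (Fin k) ℂ) {j : Fin k} (hj : 0 < σ j) :
    ‖diagRect (σ ^ p) k m n * F * headDiagonal (σ ^ p)⁻¹ j‖ ≤ (σ k / σ j) ^ p * sval F 0 := by
  have hk := pow_nonneg (hσ0 k) p
  have htail : ‖diagRect (σ ^ p) k m n‖ ≤ σ k ^ p := l2_opNorm_diagRect_le hk fun i => by
    rw [Pi.pow_apply, abs_of_nonneg (pow_nonneg (hσ0 _) p)]
    exact pow_le_pow_left₀ (hσ0 _) (hσm (Nat.le_add_right k i)) p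
  have hhead : ‖headDiagonal (σ ^ p)⁻¹ j‖ ≤ (σ j ^ p)⁻¹ :=
    l2_opNorm_headDiagonal_le (by positivity) fun l hl => by
      rw [Pi.inv_apply, Pi.pow_apply, abs_of_nonneg (inv_nonneg.mpr (pow_nonneg (hσ0 _) p))]
      have := hσm hl
      gcongr
  calc ‖diagRect (σ ^ p) k m n * F * headDiagonal (σ ^ p)⁻¹ j‖
      ≤ ‖diagRect (σ ^ p) k m n‖ * ‖F‖ * ‖headDiagonal (σ ^ p)⁻¹ j‖ :=
        (l2_opNorm_mul _ _).trans (by gcongr; exact l2_opNorm_mul _ _)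
    _ ≤ σ k ^ p * sval F 0 * (σ j ^ p)⁻¹ := by
        gcongr
        · exact mul_nonneg hk ((norm_nonneg F).trans (l2_opNorm_le_sval_zero F))
        · exact l2_opNorm_le_sval_zero F
    _ = (σ k / σ j) ^ p * sval F 0 := by
        rw [div_pow]
        ring

theorem canonical_angles_left_general {k m n r l : ℕ} (q : ℕ)
    (A : Matrix (Fin (k + m)) (Fin (k + n)) ℂ) (U : Matrix (Fin (k + m)) (Fin (k + m)) ℂ)
    (V : Matrix (Fin (k + n)) (Fin (k + n)) ℂ) (σ : ℕ → ℝ)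
    (hU : Uᴴ * U = 1) (hV : Vᴴ * V = 1) (hσ0 : ∀ i, 0 ≤ σ i) (hσm : Antitone σ)
    (hA : A = U * diagRect σ 0 (k + m) (k + n) * Vᴴ)
    (Ω : Matrix (Fin (k + n)) (Fin r) ℂ) (G : Matrix (Fin r) (Fin k) ℂ)
    (hG : (colsL V)ᴴ * Ω * G = 1)
    (Q : Matrix (Fin (k + m)) (Fin l) ℂ) (R : Matrix (Fin l) (Fin r) ℂ)
    (hQ : Qᴴ * Q = 1) (hQR : (A * Aᴴ) ^ q * A * Ω = Q * R)
    (j : Fin k) (hj : 0 < σ j) :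
    sval ((1 - Q * Qᴴ) * colsL U) (k - 1 - j) ≤
      (σ k / σ j) ^ (2 * q + 1) * sval ((colsR V)ᴴ * Ω * G) 0 /
        √(1 + (σ k / σ j) ^ (4 * q + 2) * sval ((colsR V)ᴴ * Ω * G) 0 ^ 2) := by
  set p := 2 * q + 1
  set F := (colsR V)ᴴ * Ω * G
  set H := diagRect (σ ^ p) k m n * F * headDiagonal (σ ^ p)⁻¹ j
  have hσp : ∀ i ≤ j, (σ ^ p) i ≠ 0 := fun i hi => pow_ne_zero p (hj.trans_le (hσm hi)).ne'
  have hrange : Q * (R * (G * headDiagonal (σ ^ p)⁻¹ j)) =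
      colsL U * headDiagonal 1 j + colsR U * H := by
    calc Q * (R * (G * headDiagonal (σ ^ p)⁻¹ j))
        = (A * Aᴴ) ^ q * A * (Ω * (G * headDiagonal (σ ^ p)⁻¹ j)) := by
          rw [← Matrix.mul_assoc Q, ← hQR, Matrix.mul_assoc _ Ω]
      _ = colsL U * (diagonal (fun i : Fin k => ((σ ^ p) i : ℂ)) *
            ((colsL V)ᴴ * Ω * G * headDiagonal (σ ^ p)⁻¹ j)) + colsR U * H := by
          rw [pow_mul_eq_colsL_add_colsR hU hV hA]
          simp only [p, H, F, Matrix.add_mul, Matrix.mul_assoc]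
      _ = colsL U * headDiagonal 1 j + colsR U * H := by
          rw [hG, Matrix.one_mul, diagonal_mul_headDiagonal_inv hσp]
  have hP : ‖headDiagonal 1 j‖ ≤ 1 := l2_opNorm_headDiagonal_le zero_le_one (by simp)
  have hH : ‖H‖ ≤ (σ k / σ j) ^ p * sval F 0 :=
    l2_opNorm_diagRect_mul_mul_headDiagonal_le hσ0 hσm p F hj
  have hexp : (σ k / σ j) ^ (4 * q + 2) * sval F 0 ^ 2 = ((σ k / σ j) ^ p * sval F 0) ^ 2 := by
    ring
  calc sval ((1 - Q * Qᴴ) * colsL U) (k - 1 - j)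
      ≤ ‖(1 - Q * Qᴴ) * (colsL U * headDiagonal 1 j)‖ := by
        rw [← Matrix.mul_assoc]
        exact sval_le_l2_opNorm_mul _ _ (rank_one_sub_headDiagonal j).le
    _ ≤ _ := by
        rw [hexp]
        exact l2_opNorm_one_sub_mul_le_div_sqrt hQ (conjTranspose_colsL_mul_colsL hU)
          (conjTranspose_colsR_mul_colsR hU) (conjTranspose_colsL_mul_colsR hU) hrange hP hH

end CanonicalAngles

lemma mul_rpinv {a b : ℕ} {M : Matrix (Fin a) (Fin b) ℂ} (hM : M.rank = a) : M * rpinv M = 1 := by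
  have hsurj : Function.Surjective (M * Mᴴ).mulVecLin := by
    rw [← LinearMap.range_eq_top]
    apply Submodule.eq_top_of_finrank_eq
    rw [Module.finrank_fintype_fun_eq_card, Fintype.card_fin]
    open scoped ComplexOrder in
    exact (rank_self_mul_conjTranspose M).trans hM
  rw [rpinv, ← Matrix.mul_assoc]
  exact mul_nonsing_inv _ ((isUnit_iff_isUnit_det _).mp (mulVec_surjective_iff_isUnit.mp hsurj))

/-- Theorem 3.1 (left singular subspace): bounds for the canonical angles
`θ_1 ≤ … ≤ θ_k` between the column spaces of `U_k` and `Û = Q·U_B`. -/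
theorem canonical_angles_left
    {k m₂ n₂ ρ : ℕ} (q : ℕ) (hk : 1 ≤ k)
    (A : Matrix (Fin (k + m₂)) (Fin (k + n₂)) ℂ)
    (U : Matrix (Fin (k + m₂)) (Fin (k + m₂)) ℂ)
    (V : Matrix (Fin (k + n₂)) (Fin (k + n₂)) ℂ)
    (σ : ℕ → ℝ)
    (hU : Uᴴ * U = 1) (hU' : U * Uᴴ = 1)
    (hV : Vᴴ * V = 1) (hV' : V * Vᴴ = 1)
    (hσ0 : ∀ i, 0 ≤ σ i) (hσm : ∀ i j, i ≤ j → σ j ≤ σ i)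
    (hA : A = U * diagRect σ 0 (k + m₂) (k + n₂) * Vᴴ)
    (hrank : 0 < σ (k - 1)) (hgap : σ k < σ (k - 1))
    (Ω : Matrix (Fin (k + n₂)) (Fin (k + ρ)) ℂ)
    (hΩ : ((colsL V)ᴴ * Ω).rank = k)
    (Q : Matrix (Fin (k + m₂)) (Fin (k + ρ)) ℂ)
    (R : Matrix (Fin (k + ρ)) (Fin (k + ρ)) ℂ)
    (hQ : Qᴴ * Q = 1) (hR : R.BlockTriangular id)
    (hQR : (A * Aᴴ) ^ q * A * Ω = Q * R)
    (UB : Matrix (Fin (k + ρ)) (Fin (k + ρ)) ℂ)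
    (Vh : Matrix (Fin (k + n₂)) (Fin (k + ρ)) ℂ)
    (σh : ℕ → ℝ)
    (hUB : UBᴴ * UB = 1) (hUB' : UB * UBᴴ = 1)
    (hVh : Vhᴴ * Vh = 1)
    (hσh0 : ∀ i, 0 ≤ σh i) (hσhm : ∀ i j, i ≤ j → σh j ≤ σh i)
    (hB : Qᴴ * A = UB * diagRect σh 0 (k + ρ) (k + ρ) * Vhᴴ)
    :
    ∀ j : Fin k,
      sval ((1 - Q * UB * (Q * UB)ᴴ) * colsL U) (k - 1 - (j : ℕ)) ≤
        (σ k / σ (j : ℕ)) ^ (2 * q + 1) * sval ((colsR V)ᴴ * Ω * rpinv ((colsL V)ᴴ * Ω)) 0 /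
          Real.sqrt (1 + (σ k / σ (j : ℕ)) ^ (4 * q + 2) * (sval ((colsR V)ᴴ * Ω * rpinv ((colsL V)ᴴ * Ω)) 0) ^ 2) := by
  intro j
  have hj : 0 < σ j := hrank.trans_le (hσm _ _ (by omega))
  have hQUB : (Q * UB)ᴴ * (Q * UB) = 1 := by
    rw [conjTranspose_mul, Matrix.mul_assoc, ← Matrix.mul_assoc Qᴴ, hQ, Matrix.one_mul, hUB]
  have hrange : (A * Aᴴ) ^ q * A * Ω = Q * UB * (UBᴴ * R) := by
    rw [hQR, Matrix.mul_assoc, ← Matrix.mul_assoc UB, hUB', Matrix.one_mul]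
  exact canonical_angles_left_general q A U V σ hU hV hσ0 (fun i j => hσm i j) hA Ω _
    (mul_rpinv hΩ) (Q * UB) (UBᴴ * R) hQUB hrange j hj
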